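/- Let G be a finite r-regular graph with girth g, equipped with a random label assignment with probabilities (p₀,p). Let u be a vertex with neighbours v₁,…,v_r, and fix nonnegative integers i, k with 2(i+2) < g−2. For each j, let T_j² be the tree rooted at v_j given by the component containing v_j of the graph induced on {v : d(u,v) ≤ 2} minus u, and let X₁,…,X_r be colourings (with colours purple, blue, orange, white) of the tree isomorphic to the rooted trees T_j². Let E_j be the event that T_j² has colouring X_j at time i. Then: (1) conditional on u ∈ W_i, the events E₁,…,E_r are mutually independent, i.e. P(E₁ ∧ ⋯ ∧ E_r | u ∈ W_i) = ∏_{j=1}^r P(E_j | u ∈ W_i); and (2) for any l, conditional on u ∈ B_i and v_l ∈ R_{≤i}, the events E_j for j ≠ l are mutually independent. -/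

import Mathlib

open MeasureTheory ProbabilityTheory Filter Set

namespace InducedForest

variable {V : Type*}

/-- Label `i` is *relevant* for vertex `v` (w.r.t. the label assignment `S`):
either `i = 0` and `0 ∈ S v`, or `i ∈ S v`, no `j < i` is relevant for `v`, and
there is a unique neighbour of `v` having a relevant label strictly smaller than `i`. -/
def Relevant (G : SimpleGraph V) (S : V → Set ℕ) (i : ℕ) : V → Prop :=
  Nat.strongRecOn i (fun i ih v =>
    (i = 0 ∧ 0 ∈ S v) ∨
    (i ∈ S v ∧ (∀ j, (h : j < i) → ¬ ih j h v) ∧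
      (∃! u, G.Adj v u ∧ ∃ j, ∃ h : j < i, ih j h u)))

/-- `v` has some relevant label `≤ l`, i.e. `v ∈ R_{≤ l}`. -/
def RelevantLe (G : SimpleGraph V) (S : V → Set ℕ) (l : ℕ) (v : V) : Prop :=
  ∃ i ≤ l, Relevant G S i v

inductive Colour | white | blue | orange | purple
deriving DecidableEq

open Classical in
/-- The colour of `u` at time `l`. -/
noncomputable def colourAt (G : SimpleGraph V) (S : V → Set ℕ) (l : ℕ) (u : V) : Colour :=
  if RelevantLe G S l u then Colour.purple
  else if ∀ v, G.Adj u v → ¬ RelevantLe G S l v then Colour.white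
  else if ∃! v, G.Adj u v ∧ RelevantLe G S l v then Colour.blue
  else Colour.orange

/-- The set `W_l` of white vertices at time `l`. -/
def White (G : SimpleGraph V) (S : V → Set ℕ) (l : ℕ) : Set V :=
  {u | ¬ RelevantLe G S l u ∧ ∀ v, G.Adj u v → ¬ RelevantLe G S l v}

/-- The set `B_l` of blue vertices at time `l`. -/
def Blue (G : SimpleGraph V) (S : V → Set ℕ) (l : ℕ) : Set V :=
  {u | ¬ RelevantLe G S l u ∧ ∃! v, G.Adj u v ∧ RelevantLe G S l v}
/-- The label assignment determined by a sample point `ω`. -/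
def labels (ω : V → ℕ → Bool) : V → Set ℕ := fun v => {i | ω v i = true}

/-- `μ` is the random label assignment with probabilities `(p₀, p)`: the events
`i ∈ S(v)` are mutually independent, and each has probability `p₀` if `i = 0`
and `p` if `i ≥ 1`. -/
def IsLabelMeasure (μ : Measure (V → ℕ → Bool)) (p₀ p : ℝ) : Prop :=
  IsProbabilityMeasure μ ∧
  iIndepSet (fun q : V × ℕ => {ω : V → ℕ → Bool | ω q.1 q.2 = true}) μ ∧
  ∀ (v : V) (i : ℕ), μ {ω | ω v i = true} = ENNReal.ofReal (if i = 0 then p₀ else p)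

/-- Event that `u` is white at time `l`. -/
def WEv (G : SimpleGraph V) (l : ℕ) (u : V) : Set (V → ℕ → Bool) :=
  {ω | u ∈ White G (labels ω) l}

/-- Event that `u` is blue at time `l`. -/
def BEv (G : SimpleGraph V) (l : ℕ) (u : V) : Set (V → ℕ → Bool) :=
  {ω | u ∈ Blue G (labels ω) l}

/-- Event that `u` has relevant label `i`, i.e. `u ∈ R_i`. -/
def REv (G : SimpleGraph V) (i : ℕ) (u : V) : Set (V → ℕ → Bool) :=
  {ω | Relevant G (labels ω) i u}

/-- Event that `u` has a relevant label `≤ l`, i.e. `u ∈ R_{≤ l}`. -/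
def RLeEv (G : SimpleGraph V) (l : ℕ) (u : V) : Set (V → ℕ → Bool) :=
  {ω | RelevantLe G (labels ω) l u}

/-- `G` is `r`-regular. -/
def IsRegular (G : SimpleGraph V) (r : ℕ) : Prop :=
  ∀ v : V, (G.neighborSet v).ncard = r

/-- The component containing `w` of the subgraph of `G` induced on
`{x | dist(u,x) ≤ 2} \ {u}` (for `w` a neighbour of `u`, this is the branch `T_w²`). -/
def Branch (G : SimpleGraph V) (u w : V) : Set V :=
  {x | ∃ pw : G.Walk w x, ∀ y ∈ pw.support, y ≠ u ∧ G.dist u y ≤ 2}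

/-! ### Deterministic part -/

theorem relevant_iff (G : SimpleGraph V) (S : V → Set ℕ) (i : ℕ) (v : V) :
    Relevant G S i v ↔ ((i = 0 ∧ 0 ∈ S v) ∨
      (i ∈ S v ∧ (∀ j, j < i → ¬ Relevant G S j v) ∧
        (∃! u, G.Adj v u ∧ ∃ j, j < i ∧ Relevant G S j u))) := by
  conv_lhs => unfold Relevant
  rw [Nat.strongRecOn_eq]
  simp only [exists_prop]
  rfl

/-- The graph `G` with all edges at `u` removed. -/
def del (G : SimpleGraph V) (u : V) : SimpleGraph V where
  Adj a b := G.Adj a b ∧ a ≠ u ∧ b ≠ u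
  symm := ⟨fun _ _ h => ⟨h.1.symm, h.2.2, h.2.1⟩⟩
  loopless := ⟨fun a h => G.loopless.irrefl a h.1⟩

theorem del_le (G : SimpleGraph V) (u : V) : del G u ≤ G := fun _ _ h => h.1

theorem relevant_del (G : SimpleGraph V) (S : V → Set ℕ) (u : V) (t : ℕ)
    (hu : ∀ j < t, ¬ Relevant G S j u) (x : V) (hx : x ≠ u) :
    Relevant G S t x ↔ Relevant (del G u) S t x := by
  induction t using Nat.strong_induction_on generalizing x with
  | _ t ih =>
    have ih' : ∀ j < t, ∀ x, x ≠ u → (Relevant G S j x ↔ Relevant (del G u) S j x) :=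
      fun j hj x hx => ih j hj (fun m hm => hu m (hm.trans hj)) x hx
    rw [relevant_iff, relevant_iff (del G u)]
    have h1 : (∀ j, j < t → ¬ Relevant G S j x) ↔ (∀ j, j < t → ¬ Relevant (del G u) S j x) :=
      forall_congr' fun j => forall_congr' fun hj => not_congr (ih' j hj x hx)
    have h2 : ∀ y, (G.Adj x y ∧ ∃ j, j < t ∧ Relevant G S j y) ↔
        ((del G u).Adj x y ∧ ∃ j, j < t ∧ Relevant (del G u) S j y) := by
      intro y
      by_cases hy : y = u
      · subst hy
        constructor
        · rintro ⟨_, j, hj, hr⟩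
          exact absurd hr (hu j hj)
        · rintro ⟨h, _⟩
          exact absurd rfl h.2.2
      · constructor
        · rintro ⟨h, j, hj, hr⟩
          exact ⟨⟨h, hx, hy⟩, j, hj, (ih' j hj y hy).1 hr⟩
        · rintro ⟨h, j, hj, hr⟩
          exact ⟨h.1, j, hj, (ih' j hj y hy).2 hr⟩
    rw [h1, existsUnique_congr h2]

theorem relevantLe_del (G : SimpleGraph V) (S : V → Set ℕ) (u : V) (n : ℕ)
    (hu : ¬ RelevantLe G S n u) (x : V) (hx : x ≠ u) :
    RelevantLe G S n x ↔ RelevantLe (del G u) S n x := by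
  have hu' : ∀ j ≤ n, ¬ Relevant G S j u := fun j hj h => hu ⟨j, hj, h⟩
  unfold RelevantLe
  refine exists_congr fun t => and_congr_right fun ht => ?_
  exact relevant_del G S u t (fun j hj => hu' j (hj.le.trans ht)) x hx

/-- Non-relevance of `u` in terms of the graph with `u` deleted. -/
theorem not_relevantLe_iff (G : SimpleGraph V) (S : V → Set ℕ) (u : V) (n : ℕ) :
    ¬ RelevantLe G S n u ↔ (0 ∉ S u ∧ ∀ t ≤ n, t ∈ S u →
      ¬ ∃! y, G.Adj u y ∧ ∃ j, j < t ∧ Relevant (del G u) S j y) := by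
  have key : ∀ t, (∀ j < t, ¬ Relevant G S j u) →
      ((∃! y, G.Adj u y ∧ ∃ j, j < t ∧ Relevant G S j y) ↔
        ∃! y, G.Adj u y ∧ ∃ j, j < t ∧ Relevant (del G u) S j y) := by
    intro t ht
    refine existsUnique_congr fun y => and_congr_right fun hy => ?_
    refine exists_congr fun j => and_congr_right fun hj => ?_
    exact relevant_del G S u j (fun m hm => ht m (hm.trans hj)) y hy.ne'
  constructor
  · intro h
    have h' : ∀ j ≤ n, ¬ Relevant G S j u := fun j hj hr => h ⟨j, hj, hr⟩
    refine ⟨fun h0 => h' 0 (Nat.zero_le _) ((relevant_iff _ _ _ _).2 (Or.inl ⟨rfl, h0⟩)), ?_⟩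
    intro t ht hts hex
    have hlt : ∀ j < t, ¬ Relevant G S j u := fun j hj => h' j (hj.le.trans ht)
    exact h' t ht ((relevant_iff _ _ _ _).2 (Or.inr ⟨hts, hlt, (key t hlt).2 hex⟩))
  · rintro ⟨h0, h⟩
    have : ∀ t ≤ n, ¬ Relevant G S t u := by
      intro t
      induction t using Nat.strong_induction_on with
      | _ t ih =>
        intro ht hr
        have hlt : ∀ j < t, ¬ Relevant G S j u := fun j hj => ih j hj (hj.le.trans ht)
        rcases (relevant_iff _ _ _ _).1 hr with ⟨_, h1⟩ | ⟨h1, _, h3⟩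
        · exact h0 h1
        · exact h t ht h1 ((key t hlt).1 h3)
    rintro ⟨t, ht, hr⟩
    exact this t ht hr

theorem colourAt_del (G : SimpleGraph V) (S : V → Set ℕ) (u : V) (n : ℕ)
    (hu : ¬ RelevantLe G S n u) (x : V) (hx : x ≠ u) :
    colourAt G S n x = colourAt (del G u) S n x := by
  have h2 : ∀ y, (G.Adj x y ∧ RelevantLe G S n y) ↔
      ((del G u).Adj x y ∧ RelevantLe (del G u) S n y) := by
    intro y
    by_cases hy : y = u
    · subst hy
      exact ⟨fun h => absurd h.2 hu, fun h => absurd rfl h.1.2.2⟩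
    · rw [relevantLe_del G S u n hu y hy]
      exact ⟨fun h => ⟨⟨h.1, hx, hy⟩, h.2⟩, fun h => ⟨h.1.1, h.2⟩⟩
  have h3 : (∀ y, G.Adj x y → ¬ RelevantLe G S n y) ↔
      (∀ y, (del G u).Adj x y → ¬ RelevantLe (del G u) S n y) := by
    refine forall_congr' fun y => ?_
    have := h2 y
    tauto
  classical
  unfold colourAt
  exact if_congr (relevantLe_del G S u n hu x hx) rfl
    (if_congr h3 rfl (if_congr (existsUnique_congr h2) rfl rfl))

/-- Balls, in terms of walks. -/
def WBall (H : SimpleGraph V) (c : V) (n : ℕ) : Set V :=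
  {y | ∃ q : H.Walk c y, q.length ≤ n}

theorem wball_step {H : SimpleGraph V} {a b y : V} {n : ℕ} (h : H.Adj a b)
    (hy : y ∈ WBall H b n) : y ∈ WBall H a (n + 1) := by
  obtain ⟨q, hq⟩ := hy
  exact ⟨SimpleGraph.Walk.cons h q, by simpa using hq⟩

theorem wball_mono {H : SimpleGraph V} {a : V} {m n : ℕ} (h : m ≤ n) :
    WBall H a m ⊆ WBall H a n := fun _ ⟨q, hq⟩ => ⟨q, hq.trans h⟩

theorem wball_self {H : SimpleGraph V} {a : V} {n : ℕ} : a ∈ WBall H a n :=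
  ⟨SimpleGraph.Walk.nil, by simp⟩

/-- Relevance depends only on labels in a ball. -/
theorem relevant_local (H : SimpleGraph V) (S S' : V → Set ℕ) (t : ℕ) (x : V)
    (h : ∀ y ∈ WBall H x t, ∀ m ≤ t, m ∈ S y ↔ m ∈ S' y) :
    Relevant H S t x ↔ Relevant H S' t x := by
  induction t using Nat.strong_induction_on generalizing x with
  | _ t ih =>
    rw [relevant_iff, relevant_iff H S']
    have h0 : 0 ∈ S x ↔ 0 ∈ S' x := h x wball_self 0 (Nat.zero_le _)
    have h1 : t ∈ S x ↔ t ∈ S' x := h x wball_self t le_rfl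
    have h2 : (∀ j, j < t → ¬ Relevant H S j x) ↔ (∀ j, j < t → ¬ Relevant H S' j x) :=
      forall_congr' fun j => forall_congr' fun hj => not_congr
        (ih j hj x fun y hy m hm => h y (wball_mono hj.le hy) m (hm.trans hj.le))
    have h3 : ∀ y, (H.Adj x y ∧ ∃ j, j < t ∧ Relevant H S j y) ↔
        (H.Adj x y ∧ ∃ j, j < t ∧ Relevant H S' j y) := by
      intro y
      refine and_congr_right fun hxy => exists_congr fun j => and_congr_right fun hj => ?_
      exact ih j hj y fun z hz m hm =>
        h z (wball_mono hj (wball_step hxy hz)) m (hm.trans hj.le)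
    rw [h0, h1, h2, existsUnique_congr h3]

theorem relevantLe_local (H : SimpleGraph V) (S S' : V → Set ℕ) (n : ℕ) (x : V)
    (h : ∀ y ∈ WBall H x n, ∀ m ≤ n, m ∈ S y ↔ m ∈ S' y) :
    RelevantLe H S n x ↔ RelevantLe H S' n x := by
  unfold RelevantLe
  refine exists_congr fun t => and_congr_right fun ht => ?_
  exact relevant_local H S S' t x fun y hy m hm => h y (wball_mono ht hy) m (hm.trans ht)

theorem colourAt_local (H : SimpleGraph V) (S S' : V → Set ℕ) (n : ℕ) (x : V)
    (h : ∀ y ∈ WBall H x (n + 1), ∀ m ≤ n, m ∈ S y ↔ m ∈ S' y) :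
    colourAt H S n x = colourAt H S' n x := by
  have h1 : RelevantLe H S n x ↔ RelevantLe H S' n x :=
    relevantLe_local H S S' n x fun y hy => h y (wball_mono (Nat.le_succ n) hy)
  have h2 : ∀ y, H.Adj x y → (RelevantLe H S n y ↔ RelevantLe H S' n y) := fun y hy =>
    relevantLe_local H S S' n y fun z hz => h z (wball_step hy hz)
  have h3 : (∀ y, H.Adj x y → ¬ RelevantLe H S n y) ↔
      (∀ y, H.Adj x y → ¬ RelevantLe H S' n y) :=
    forall_congr' fun y => forall_congr' fun hy => not_congr (h2 y hy)
  have h4 : ∀ y, (H.Adj x y ∧ RelevantLe H S n y) ↔ (H.Adj x y ∧ RelevantLe H S' n y) :=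
    fun y => and_congr_right fun hy => h2 y hy
  classical
  unfold colourAt
  exact if_congr h1 rfl (if_congr h3 rfl (if_congr (existsUnique_congr h4) rfl rfl))

/-- Two distinct neighbours of `u` are not joined by a short walk avoiding `u`. -/
theorem no_short_walk (G : SimpleGraph V) (u a b : V) (g n : ℕ) (hg : (g : ℕ∞) ≤ G.egirth)
    (ha : G.Adj u a) (hb : G.Adj u b) (hab : a ≠ b) (q : (del G u).Walk a b)
    (hq : q.length ≤ n) (hn : n + 2 < g) : False := by
  classical
  have hu : ∀ {c d : V} (w : (del G u).Walk c d), c ≠ u → u ∉ w.support := by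
    intro c d w
    induction w with
    | nil => intro h; simpa using h.symm
    | cons h w ih =>
      intro hc
      simp only [SimpleGraph.Walk.support_cons, List.mem_cons, not_or]
      exact ⟨hc.symm, ih h.2.2⟩
  let q' : G.Walk a b := (q.bypass).mapLe (del_le G u)
  have hq'p : q'.IsPath := (q.bypass_isPath).mapLe _
  have hq'l : q'.length ≤ n := by
    simpa [q'] using (q.length_bypass_le_length).trans hq
  have hq'u : u ∉ q'.support := by
    simpa [q'] using hu q.bypass ha.ne'
  have hpath : (SimpleGraph.Walk.cons ha q').IsPath := hq'p.cons hq'u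
  have hcyc : (SimpleGraph.Walk.cons hb.symm (SimpleGraph.Walk.cons ha q')).IsCycle := by
    rw [SimpleGraph.Walk.cons_isCycle_iff]
    refine ⟨hpath, ?_⟩
    simp only [SimpleGraph.Walk.edges_cons, List.mem_cons, not_or]
    refine ⟨?_, fun h => hq'u (q'.snd_mem_support_of_mem_edges h)⟩
    intro h
    rw [Sym2.eq_iff] at h
    rcases h with ⟨h1, _⟩ | ⟨h1, _⟩
    · exact hb.ne' h1
    · exact hab h1.symm
  have := hg.trans (SimpleGraph.egirth_le_length hcyc)
  simp only [SimpleGraph.Walk.length_cons] at this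
  have h2 : g ≤ q'.length + 1 + 1 := by exact_mod_cast this
  omega

theorem wball_disjoint (G : SimpleGraph V) (u a b : V) (g m : ℕ) (hg : (g : ℕ∞) ≤ G.egirth)
    (ha : G.Adj u a) (hb : G.Adj u b) (hab : a ≠ b) (hm : 2 * m + 2 < g) :
    Disjoint (WBall (del G u) a m) (WBall (del G u) b m) := by
  rw [Set.disjoint_left]
  rintro y ⟨q, hq⟩ ⟨q', hq'⟩
  exact no_short_walk G u a b g (2 * m) hg ha hb hab (q.append q'.reverse)
    (by simp; omega) hm

theorem not_mem_wball (G : SimpleGraph V) (u a : V) (m : ℕ) (ha : a ≠ u) :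
    u ∉ WBall (del G u) a m := by
  rintro ⟨q, -⟩
  have hu : ∀ {c d : V} (w : (del G u).Walk c d), c ≠ u → d ≠ u := by
    intro c d w
    induction w with
    | nil => exact id
    | cons h w ih => exact fun _ => ih h.2.2
  exact hu q ha rfl

theorem branch_subset (G : SimpleGraph V) (u w : V) (g : ℕ) (hg : (g : ℕ∞) ≤ G.egirth)
    (hg7 : 7 ≤ g) (hw : G.Adj u w) : ∀ x ∈ Branch G u w, x ∈ WBall (del G u) w 1 := by
  have aux : ∀ z, G.Reachable u z → z ≠ u → G.dist u z ≤ 2 →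
      ∃ c, G.Adj u c ∧ z ∈ WBall (del G u) c 1 := by
    intro z hr hz hd
    obtain ⟨q, hq⟩ := hr.exists_walk_length_eq_dist
    rw [← hq] at hd
    match q, hd with
    | .nil, _ => exact absurd rfl hz
    | .cons h .nil, _ => exact ⟨_, h, wball_self⟩
    | .cons h (.cons h' .nil), _ =>
      exact ⟨_, h, wball_step (n := 0) ⟨h', h.ne', hz⟩ wball_self⟩
    | .cons _ (.cons _ (.cons _ _)), hd => simp at hd
  have step : ∀ y z, y ∈ WBall (del G u) w 1 → y ≠ u → G.Adj y z → z ≠ u → G.dist u z ≤ 2 →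
      z ∈ WBall (del G u) w 1 := by
    rintro y z ⟨q, hq⟩ hy hyz hz hd
    have hr : G.Reachable u z :=
      (hw.reachable.trans (q.mapLe (del_le G u)).reachable).trans hyz.reachable
    obtain ⟨c, hc, q', hq'⟩ := aux z hr hz hd
    by_cases hcw : w = c
    · subst hcw; exact ⟨q', hq'⟩
    · exfalso
      have hadj : (del G u).Adj y z := ⟨hyz, hy, hz⟩
      refine no_short_walk G u w c g 3 hg hw hc hcw
        (q.append (SimpleGraph.Walk.cons hadj q'.reverse)) ?_ (by omega)
      simp
      omega
  have main : ∀ {a x : V} (q : G.Walk a x), a ∈ WBall (del G u) w 1 →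
      (∀ y ∈ q.support, y ≠ u ∧ G.dist u y ≤ 2) → x ∈ WBall (del G u) w 1 := by
    intro a x q
    induction q with
    | nil => exact fun h _ => h
    | cons h q ih =>
      intro ha hs
      have hb := hs _ (by
        rw [SimpleGraph.Walk.support_cons]
        exact List.mem_cons_of_mem _ q.start_mem_support)
      refine ih (step _ _ ha (hs _ (by simp)).1 h hb.1 hb.2) fun y hy => hs y ?_
      rw [SimpleGraph.Walk.support_cons]
      exact List.mem_cons_of_mem _ hy
  rintro x ⟨q, hq⟩
  exact main q wball_self hq

/-! ### Probabilistic part -/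

/-- The event `A` depends only on the labels `≤ n` at vertices of `K`. -/
def Dep (n : ℕ) (K : Set V) (A : Set (V → ℕ → Bool)) : Prop :=
  ∀ ω ω' : V → ℕ → Bool, (∀ v ∈ K, ∀ t ≤ n, ω v t = ω' v t) → ω ∈ A → ω' ∈ A

theorem Dep.mono {n : ℕ} {K L : Set V} {A : Set (V → ℕ → Bool)} (h : Dep n K A) (hKL : K ⊆ L) :
    Dep n L A := fun ω ω' hw => h ω ω' fun v hv => hw v (hKL hv)

theorem Dep.inter {n : ℕ} {K : Set V} {A B : Set (V → ℕ → Bool)} (h : Dep n K A)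
    (h' : Dep n K B) : Dep n K (A ∩ B) :=
  fun ω ω' hw hm => ⟨h ω ω' hw hm.1, h' ω ω' hw hm.2⟩

theorem Dep.univ {n : ℕ} {K : Set V} : Dep n K (Set.univ : Set (V → ℕ → Bool)) :=
  fun _ _ _ _ => trivial

theorem Dep.biInter {ι : Type*} {n : ℕ} {s : Finset ι} {K : ι → Set V}
    {F : ι → Set (V → ℕ → Bool)} (h : ∀ j ∈ s, Dep n (K j) (F j)) :
    Dep n (⋃ j ∈ s, K j) (⋂ j ∈ s, F j) := by
  intro ω ω' hw hm
  simp only [Set.mem_iInter] at hm ⊢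
  intro j hj
  refine h j hj ω ω' (fun v hv => hw v ?_) (hm j hj)
  simp only [Set.mem_iUnion]
  exact ⟨j, hj, hv⟩

/-- The coordinate functions. -/
def coord (q : V × ℕ) (ω : V → ℕ → Bool) : Bool := ω q.1 q.2

theorem measurable_coord (q : V × ℕ) : Measurable (coord q) := by
  unfold coord
  fun_prop

theorem iIndepFun_coord {μ : Measure (V → ℕ → Bool)} {p₀ p : ℝ} (hμ : IsLabelMeasure μ p₀ p) :
    iIndepFun (fun q : V × ℕ => coord q) μ := by
  rw [iIndepFun_iff]
  intro s f hf
  have h := (iIndepSet_iff _ _).1 hμ.2.1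
  refine h s fun q hq => ?_
  obtain ⟨T, _, hT⟩ := hf q hq
  have hgen : @MeasurableSet _ (MeasurableSpace.generateFrom
      {{ω : V → ℕ → Bool | ω q.1 q.2 = true}}) {ω : V → ℕ → Bool | ω q.1 q.2 = true} :=
    MeasurableSpace.measurableSet_generateFrom rfl
  have hm : @Measurable _ _ (MeasurableSpace.generateFrom
      {{ω : V → ℕ → Bool | ω q.1 q.2 = true}}) _ (coord q) := by
    refine @measurable_to_bool _ (MeasurableSpace.generateFrom
      {{ω : V → ℕ → Bool | ω q.1 q.2 = true}}) (coord q) ?_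
    exact hgen
  rw [← hT]
  exact hm (by measurability)

open Classical in
/-- Finite coordinate set attached to a set of vertices. -/
noncomputable def coords [Fintype V] (n : ℕ) (K : Set V) : Finset (V × ℕ) :=
  (Finset.univ.filter (· ∈ K)) ×ˢ (Finset.range (n + 1))

theorem dep_preimage [Fintype V] {n : ℕ} {K : Set V} {A : Set (V → ℕ → Bool)} (h : Dep n K A) :
    ∃ T : Set (coords n K → Bool),
      A = (fun ω (q : coords n K) => coord (q : V × ℕ) ω) ⁻¹' T := by
  refine ⟨(fun ω (q : coords n K) => coord (q : V × ℕ) ω) '' A, ?_⟩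
  apply Set.Subset.antisymm (Set.subset_preimage_image _ _)
  rintro ω' ⟨ω, hω, he⟩
  refine h ω ω' (fun v hv t ht => ?_) hω
  have hmem : (v, t) ∈ coords n K := by
    simp [coords, hv]; omega
  exact congrFun he ⟨(v, t), hmem⟩

theorem Dep.measurableSet [Fintype V] {n : ℕ} {K : Set V} {A : Set (V → ℕ → Bool)}
    (h : Dep n K A) : MeasurableSet A := by
  obtain ⟨T, hT⟩ := dep_preimage h
  rw [hT]
  refine measurableSet_preimage ?_ (Set.toFinite T).measurableSet
  exact measurable_pi_lambda _ fun q => measurable_coord _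

theorem Dep.indep [Fintype V] {μ : Measure (V → ℕ → Bool)} {p₀ p : ℝ}
    (hμ : IsLabelMeasure μ p₀ p) {n : ℕ} {K L : Set V} {A B : Set (V → ℕ → Bool)}
    (hA : Dep n K A) (hB : Dep n L B) (hKL : Disjoint K L) : μ (A ∩ B) = μ A * μ B := by
  obtain ⟨T, hT⟩ := dep_preimage hA
  obtain ⟨U, hU⟩ := dep_preimage hB
  have hd : Disjoint (coords n K) (coords n L) := by
    rw [Finset.disjoint_left]
    rintro ⟨v, t⟩ h1 h2
    simp only [coords, Finset.mem_product, Finset.mem_filter] at h1 h2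
    exact Set.disjoint_left.1 hKL h1.1.2 h2.1.2
  have hind := (iIndepFun_coord hμ).indepFun_finset (coords n K) (coords n L) hd
    (fun q => measurable_coord q)
  rw [hT, hU]
  exact hind.measure_inter_preimage_eq_mul _ _ (Set.toFinite T).measurableSet
    (Set.toFinite U).measurableSet

theorem dep_prod [Fintype V] {μ : Measure (V → ℕ → Bool)} {p₀ p : ℝ}
    (hμ : IsLabelMeasure μ p₀ p) {ι : Type*} [DecidableEq ι] {n : ℕ} (s : Finset ι)
    {K₀ : Set V} {K : ι → Set V}
    {A : Set (V → ℕ → Bool)} {F : ι → Set (V → ℕ → Bool)} (hA : Dep n K₀ A)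
    (hF : ∀ j ∈ s, Dep n (K j) (F j)) (h0 : ∀ j ∈ s, Disjoint K₀ (K j))
    (hK : ∀ j ∈ s, ∀ m ∈ s, j ≠ m → Disjoint (K j) (K m)) :
    μ (A ∩ ⋂ j ∈ s, F j) = μ A * ∏ j ∈ s, μ (F j) := by
  induction s using Finset.induction_on with
  | empty => simp
  | insert a s ha ih =>
    have hs : ∀ j ∈ s, j ∈ insert a s := fun j hj => Finset.mem_insert_of_mem hj
    have haa : a ∈ insert a s := Finset.mem_insert_self a s
    have e : A ∩ ⋂ j ∈ insert a s, F j = F a ∩ (A ∩ ⋂ j ∈ s, F j) := by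
      rw [Finset.set_biInter_insert, Set.inter_left_comm]
    have hrest : Dep n (K₀ ∪ ⋃ j ∈ s, K j) (A ∩ ⋂ j ∈ s, F j) :=
      (hA.mono Set.subset_union_left).inter
        ((Dep.biInter fun j hj => hF j (hs j hj)).mono Set.subset_union_right)
    rw [e, Dep.indep hμ (hF a haa) hrest ?_, Finset.prod_insert ha,
      ih (fun j hj => hF j (hs j hj)) (fun j hj => h0 j (hs j hj))
        (fun j hj m hm => hK j (hs j hj) m (hs m hm)), mul_left_comm]
    rw [Set.disjoint_union_right, Set.disjoint_iUnion₂_right]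
    refine ⟨(h0 a haa).symm, fun j hj => hK a haa j (hs j hj) ?_⟩
    rintro rfl
    exact ha hj

theorem cond_prod [Fintype V] {μ : Measure (V → ℕ → Bool)} {p₀ p : ℝ}
    (hμ : IsLabelMeasure μ p₀ p) {ι : Type*} [DecidableEq ι] {n : ℕ} (s : Finset ι)
    {K₀ : Set V} {K : ι → Set V}
    {A C : Set (V → ℕ → Bool)} {D E Ev : ι → Set (V → ℕ → Bool)} (hA : Dep n K₀ A)
    (hD : ∀ j ∈ s, Dep n (K j) (D j)) (hE : ∀ j ∈ s, Dep n (K j) (E j))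
    (h0 : ∀ j ∈ s, Disjoint K₀ (K j))
    (hK : ∀ j ∈ s, ∀ m ∈ s, j ≠ m → Disjoint (K j) (K m))
    (hC : C = A ∩ ⋂ j ∈ s, D j) (hEv : ∀ j ∈ s, ∀ ω ∈ C, (ω ∈ Ev j ↔ ω ∈ E j))
    (hpos : μ C ≠ 0) :
    μ[|C] (⋂ j ∈ s, Ev j) = ∏ j ∈ s, μ[|C] (Ev j) := by
  have hprob : IsProbabilityMeasure μ := hμ.1
  have hCm : MeasurableSet C := by
    rw [hC]
    exact hA.measurableSet.inter (Dep.biInter hD).measurableSet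
  have hCv : μ C = μ A * ∏ j ∈ s, μ (D j) := by
    rw [hC]
    exact dep_prod hμ s hA hD h0 hK
  have hA0 : μ A ≠ 0 := fun h => hpos (by rw [hCv, h, zero_mul])
  have hP0 : ∏ j ∈ s, μ (D j) ≠ 0 := fun h => hpos (by rw [hCv, h, mul_zero])
  have hD0 : ∀ j ∈ s, μ (D j) ≠ 0 := Finset.prod_ne_zero_iff.1 hP0
  have hAll : μ (C ∩ ⋂ j ∈ s, Ev j) = μ A * ∏ j ∈ s, μ (D j ∩ E j) := by
    have e : C ∩ ⋂ j ∈ s, Ev j = A ∩ ⋂ j ∈ s, (D j ∩ E j) := by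
      ext ω
      have h1 : ω ∈ C ↔ ω ∈ A ∧ ∀ j ∈ s, ω ∈ D j := by simp [hC]
      simp only [Set.mem_inter_iff, Set.mem_iInter]
      constructor
      · rintro ⟨hc, he⟩
        exact ⟨(h1.1 hc).1, fun j hj => ⟨(h1.1 hc).2 j hj, (hEv j hj ω hc).1 (he j hj)⟩⟩
      · rintro ⟨ha, he⟩
        have hc := h1.2 ⟨ha, fun j hj => (he j hj).1⟩
        exact ⟨hc, fun j hj => (hEv j hj ω hc).2 (he j hj).2⟩
    rw [e]
    exact dep_prod hμ s hA (fun j hj => (hD j hj).inter (hE j hj)) h0 hK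
  have hOne : ∀ j ∈ s, μ (C ∩ Ev j) = μ A * (μ (D j ∩ E j) * ∏ m ∈ s.erase j, μ (D m)) := by
    intro j hj
    have e : C ∩ Ev j = A ∩ ⋂ m ∈ s, (if m = j then D m ∩ E m else D m) := by
      ext ω
      have h1 : ω ∈ C ↔ ω ∈ A ∧ ∀ j ∈ s, ω ∈ D j := by simp [hC]
      simp only [Set.mem_inter_iff, Set.mem_iInter]
      constructor
      · rintro ⟨hc, he⟩
        refine ⟨(h1.1 hc).1, fun m hm => ?_⟩
        split_ifs with hmj
        · subst hmj
          exact ⟨(h1.1 hc).2 m hm, (hEv m hm ω hc).1 he⟩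
        · exact (h1.1 hc).2 m hm
      · rintro ⟨ha, he⟩
        have hc := h1.2 ⟨ha, fun m hm => by
          have := he m hm
          split_ifs at this
          · exact this.1
          · exact this⟩
        refine ⟨hc, (hEv j hj ω hc).2 ?_⟩
        have := he j hj
        rw [if_pos rfl] at this
        exact this.2
    rw [e, dep_prod hμ s hA (fun m hm => ?_) h0 hK, ← Finset.mul_prod_erase s _ hj, if_pos rfl]
    · congr 2
      refine Finset.prod_congr rfl fun m hm => ?_
      rw [if_neg (Finset.ne_of_mem_erase hm)]
    · split_ifs
      · exact (hD m hm).inter (hE m hm)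
      · exact hD m hm
  have hdiv : ∀ j ∈ s, μ[|C] (Ev j) = (μ (D j))⁻¹ * μ (D j ∩ E j) := by
    intro j hj
    rw [cond_apply hCm, hOne j hj, hCv, ← Finset.mul_prod_erase s _ hj]
    set R := ∏ m ∈ s.erase j, μ (D m)
    have hR0 : R ≠ 0 := Finset.prod_ne_zero_iff.2 fun m hm => hD0 m (Finset.mem_of_mem_erase hm)
    have hRt : R ≠ ⊤ := ENNReal.prod_ne_top fun m _ => measure_ne_top μ _
    rw [ENNReal.mul_inv (Or.inl hA0) (Or.inl (measure_ne_top μ _)),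
      ENNReal.mul_inv (Or.inl (hD0 j hj)) (Or.inl (measure_ne_top μ _))]
    calc (μ A)⁻¹ * ((μ (D j))⁻¹ * R⁻¹) * (μ A * (μ (D j ∩ E j) * R))
        = ((μ A)⁻¹ * μ A) * (R⁻¹ * R) * ((μ (D j))⁻¹ * μ (D j ∩ E j)) := by ring
      _ = _ := by
        rw [ENNReal.inv_mul_cancel hA0 (measure_ne_top μ _), ENNReal.inv_mul_cancel hR0 hRt]
        simp
  rw [Finset.prod_congr rfl hdiv, Finset.prod_mul_distrib, cond_apply hCm, hAll, hCv,
    ENNReal.mul_inv (Or.inl hA0) (Or.inl (measure_ne_top μ _)),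
    ← ENNReal.prod_inv_distrib]
  · calc (μ A)⁻¹ * (∏ j ∈ s, μ (D j))⁻¹ * (μ A * ∏ j ∈ s, μ (D j ∩ E j))
        = ((μ A)⁻¹ * μ A) * ((∏ j ∈ s, μ (D j))⁻¹ * ∏ j ∈ s, μ (D j ∩ E j)) := by ring
      _ = _ := by
        rw [ENNReal.inv_mul_cancel hA0 (measure_ne_top μ _), one_mul]
  · intro a _ b _ _
    exact Or.inr (measure_ne_top μ _)

/-- Any prescription of the labels `≤ n` has positive probability. -/
theorem pos_of_pattern [Fintype V] {μ : Measure (V → ℕ → Bool)} {p₀ p : ℝ}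
    (hμ : IsLabelMeasure μ p₀ p) (hp₀ : p₀ ∈ Ioo (0 : ℝ) 1) (hp : p ∈ Ioo (0 : ℝ) 1)
    (n : ℕ) (a : V → ℕ → Bool) (C : Set (V → ℕ → Bool))
    (hC : ∀ ω : V → ℕ → Bool, (∀ v, ∀ t ≤ n, ω v t = a v t) → ω ∈ C) : μ C ≠ 0 := by
  classical
  have hprob : IsProbabilityMeasure μ := hμ.1
  have h := (iIndepFun_coord hμ).measure_inter_preimage_eq_mul (coords n (Set.univ : Set V))
    (sets := fun q => {a q.1 q.2}) (fun q _ => measurableSet_singleton _)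
  have hsub : (⋂ q ∈ coords n (Set.univ : Set V), coord q ⁻¹' {a q.1 q.2}) ⊆ C := by
    intro ω hω
    refine hC ω fun v t ht => ?_
    simp only [Set.mem_iInter] at hω
    have := hω (v, t) (by simp [coords]; omega)
    exact this
  have hne : ∏ q ∈ coords n (Set.univ : Set V), μ (coord q ⁻¹' {a q.1 q.2}) ≠ 0 := by
    refine Finset.prod_ne_zero_iff.2 fun q _ => ?_
    have hv := hμ.2.2 q.1 q.2
    have hx : 0 < (if q.2 = 0 then p₀ else p) ∧ (if q.2 = 0 then p₀ else p) < 1 := by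
      split_ifs
      · exact hp₀
      · exact hp
    cases ha : a q.1 q.2
    · have e : coord q ⁻¹' {false} = {ω : V → ℕ → Bool | ω q.1 q.2 = true}ᶜ := by
        ext ω
        simp [coord]
      have hms : MeasurableSet {ω : V → ℕ → Bool | ω q.1 q.2 = true} :=
        measurable_coord q (measurableSet_singleton true)
      rw [e, prob_compl_eq_one_sub hms, hv]
      have : ENNReal.ofReal (if q.2 = 0 then p₀ else p) < 1 := by
        rw [ENNReal.ofReal_lt_one]
        exact hx.2
      exact (tsub_pos_of_lt this).ne'
    · have e : coord q ⁻¹' {true} = {ω : V → ℕ → Bool | ω q.1 q.2 = true} := by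
        ext ω
        simp [coord]
      rw [e, hv]
      exact (ENNReal.ofReal_pos.2 hx.1).ne'
  intro h0
  exact hne (h ▸ measure_mono_null hsub h0)

/-- A vertex with no labels `≤ n` has no relevant label `≤ n`. -/
theorem not_relevantLe_of_empty (G : SimpleGraph V) (S : V → Set ℕ) (n : ℕ) (x : V)
    (h : ∀ t ≤ n, t ∉ S x) : ¬ RelevantLe G S n x := by
  rintro ⟨t, ht, hr⟩
  rcases (relevant_iff _ _ _ _).1 hr with ⟨_, h1⟩ | ⟨h1, _⟩
  · exact h 0 (Nat.zero_le _) h1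
  · exact h t ht h1

theorem dep_relevantLe (H : SimpleGraph V) (n m : ℕ) (hnm : n ≤ m) (x : V) :
    Dep n (WBall H x m) {ω | ¬ RelevantLe H (labels ω) n x} := by
  intro ω ω' hw hm
  have := relevantLe_local H (labels ω) (labels ω') n x fun y hy t ht => by
    simp [labels, hw y (wball_mono hnm hy) t ht]
  exact fun h => hm (this.2 h)

theorem dep_colour (G : SimpleGraph V) (u w : V) (g n : ℕ) (hg : (g : ℕ∞) ≤ G.egirth)
    (hg7 : 7 ≤ g) (hw : G.Adj u w) (X : V → Colour) :
    Dep n (WBall (del G u) w (n + 2))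
      {ω | ∀ x ∈ Branch G u w, colourAt (del G u) (labels ω) n x = X x} := by
  intro ω ω' hww hm x hx
  rw [← hm x hx]
  symm
  apply colourAt_local
  intro y hy t ht
  have hy' : y ∈ WBall (del G u) w (n + 2) := by
    obtain ⟨q, hq⟩ := branch_subset G u w g hg hg7 hw x hx
    obtain ⟨q', hq'⟩ := hy
    exact ⟨q.append q', by simp; omega⟩
  simp [labels, hww y hy' t ht]

theorem branch_ne (G : SimpleGraph V) (u w x : V) (hx : x ∈ Branch G u w) : x ≠ u := by
  obtain ⟨q, hq⟩ := hx
  exact (hq x q.end_mem_support).1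

/-- Conditional on `u` being white at time `i` (resp. on `u` being blue
with `v l` having a relevant label `≤ i`), the colourings at time `i` of the branches
`T_j²` hanging from the neighbours of `u` are mutually independent. -/
theorem branch_colourings_conditionally_independent
    [Fintype V] (r g : ℕ) (G : SimpleGraph V)
    (hreg : IsRegular G r) (hg : (g : ℕ∞) ≤ G.egirth)
    (p₀ p : ℝ) (hp₀ : p₀ ∈ Ioo (0 : ℝ) 1) (hp : p ∈ Ioo (0 : ℝ) 1)
    (μ : Measure (V → ℕ → Bool)) (hμ : IsLabelMeasure μ p₀ p)
    (u : V) (v : Fin r → V) (hadj : ∀ j, G.Adj u (v j)) (hinj : Function.Injective v)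
    (i k : ℕ) (hik : 2 * (i + 2) < g - 2)
    (X : Fin r → V → Colour) :
    (μ[|WEv G i u]
        (⋂ j, {ω | ∀ x ∈ Branch G u (v j), colourAt G (labels ω) i x = X j x})
      = ∏ j, μ[|WEv G i u]
          {ω | ∀ x ∈ Branch G u (v j), colourAt G (labels ω) i x = X j x}) ∧
    (∀ l : Fin r,
      μ[|BEv G i u ∩ RLeEv G i (v l)]
          (⋂ j ∈ Finset.univ.erase l,
            {ω | ∀ x ∈ Branch G u (v j), colourAt G (labels ω) i x = X j x})
        = ∏ j ∈ Finset.univ.erase l,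
            μ[|BEv G i u ∩ RLeEv G i (v l)]
              {ω | ∀ x ∈ Branch G u (v j), colourAt G (labels ω) i x = X j x}) := by
  classical
  have hg7 : 7 ≤ g := by omega
  have hgi : 2 * (i + 2) + 2 < g := by omega
  have hall : ∀ y, G.Adj u y → ∃ j, v j = y := by
    intro y hy
    have hsub : Set.range v ⊆ G.neighborSet u := by
      rintro _ ⟨j, rfl⟩
      exact hadj j
    have hcard : (Set.range v).ncard = r := by
      rw [← Set.image_univ, Set.ncard_image_of_injective _ hinj, Set.ncard_univ]
      simp
    have heq : Set.range v = G.neighborSet u :=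
      Set.eq_of_subset_of_ncard_le hsub (by rw [hcard, hreg u]) (Set.toFinite _)
    have : y ∈ Set.range v := by
      rw [heq]
      exact hy
    exact this
  let K : Fin r → Set V := fun j => WBall (del G u) (v j) (i + 2)
  let D : Fin r → Set (V → ℕ → Bool) := fun j => {ω | ¬ RelevantLe (del G u) (labels ω) i (v j)}
  let E : Fin r → Set (V → ℕ → Bool) := fun j =>
    {ω | ∀ x ∈ Branch G u (v j), colourAt (del G u) (labels ω) i x = X j x}
  have hD : ∀ j, Dep i (K j) (D j) := fun j => dep_relevantLe _ _ _ (by omega) _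
  have hE : ∀ j, Dep i (K j) (E j) := fun j => dep_colour G u (v j) g i hg hg7 (hadj j) (X j)
  have hK : ∀ j m, j ≠ m → Disjoint (K j) (K m) := fun j m hjm =>
    wball_disjoint G u (v j) (v m) g (i + 2) hg (hadj j) (hadj m) (hinj.ne hjm) hgi
  have huK : ∀ j, Disjoint {u} (K j) := fun j =>
    Set.disjoint_singleton_left.2 (not_mem_wball G u (v j) _ (hadj j).ne')
  have hEE : ∀ j ω, ¬ RelevantLe G (labels ω) i u →
      (ω ∈ {ω | ∀ x ∈ Branch G u (v j), colourAt G (labels ω) i x = X j x} ↔ ω ∈ E j) := by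
    intro j ω hu
    refine forall_congr' fun x => forall_congr' fun hx => ?_
    rw [colourAt_del G (labels ω) u i hu x (branch_ne G u _ x hx)]
  constructor
  · have := cond_prod (μ := μ) hμ (n := i) (Finset.univ : Finset (Fin r)) (K₀ := {u}) (K := K)
      (A := {ω | 0 ∉ labels ω u}) (C := WEv G i u) (D := D) (E := E)
      (Ev := fun j => {ω | ∀ x ∈ Branch G u (v j), colourAt G (labels ω) i x = X j x})
      (fun ω ω' hw hm => by
        simpa [labels, hw u rfl 0 (Nat.zero_le _)] using hm)
      (fun j _ => hD j) (fun j _ => hE j) (fun j _ => huK j) (fun j _ m _ => hK j m)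
      (by
        ext ω
        simp only [WEv, White, Set.mem_setOf_eq, Set.mem_inter_iff, Set.mem_iInter,
          Finset.mem_univ, true_imp_iff, D]
        constructor
        · rintro ⟨hu, hn⟩
          refine ⟨((not_relevantLe_iff _ _ _ _).1 hu).1, fun j => ?_⟩
          rw [← relevantLe_del G _ u i hu _ (hadj j).ne']
          exact hn _ (hadj j)
        · rintro ⟨h0, hj⟩
          have hu : ¬ RelevantLe G (labels ω) i u := by
            rw [not_relevantLe_iff]
            refine ⟨h0, fun t ht _ => ?_⟩
            rintro ⟨y, ⟨hy, m, hm, hr⟩, -⟩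
            obtain ⟨j, rfl⟩ := hall y hy
            exact hj j ⟨m, hm.le.trans ht, hr⟩
          refine ⟨hu, fun y hy => ?_⟩
          obtain ⟨j, rfl⟩ := hall y hy
          rw [relevantLe_del G _ u i hu _ hy.ne']
          exact hj j)
      (fun j _ ω hω => hEE j ω hω.1)
      (pos_of_pattern hμ hp₀ hp i (fun _ _ => false) _ fun ω hω => by
        have : ∀ y, ¬ RelevantLe G (labels ω) i y := fun y =>
          not_relevantLe_of_empty _ _ _ _ fun t ht => by simp [labels, hω y t ht]
        exact ⟨this u, fun y _ => this y⟩)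
    simpa using this
  · intro l
    have hjl : ∀ j ∈ Finset.univ.erase l, j ≠ l := fun j hj => Finset.ne_of_mem_erase hj
    refine cond_prod (μ := μ) hμ (n := i) (Finset.univ.erase l : Finset (Fin r))
      (K₀ := {u} ∪ K l) (K := K)
      (A := {ω | RelevantLe (del G u) (labels ω) i (v l) ∧ 0 ∉ labels ω u ∧
        ∀ t ≤ i, t ∈ labels ω u → ¬ ∃ j, j < t ∧ Relevant (del G u) (labels ω) j (v l)})
      (C := BEv G i u ∩ RLeEv G i (v l)) (D := D) (E := E)
      (Ev := fun j => {ω | ∀ x ∈ Branch G u (v j), colourAt G (labels ω) i x = X j x})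
      ?_ (fun j _ => hD j) (fun j _ => hE j) ?_ (fun j _ m _ => hK j m) ?_
      (fun j _ ω hω => hEE j ω hω.1.1) ?_
    · rintro ω ω' hw ⟨h1, h2, h3⟩
      have hloc : ∀ y ∈ K l, ∀ m ≤ i, m ∈ labels ω y ↔ m ∈ labels ω' y := fun y hy m hm => by
        simp [labels, hw y (Or.inr hy) m hm]
      have hlu : ∀ m ≤ i, m ∈ labels ω u ↔ m ∈ labels ω' u := fun m hm => by
        simp [labels, hw u (Or.inl rfl) m hm]
      refine ⟨?_, ?_, ?_⟩
      · refine (relevantLe_local _ _ _ _ _ fun y hy => ?_).1 h1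
        exact hloc y (wball_mono (by omega) hy)
      · rwa [← hlu 0 (Nat.zero_le _)]
      · rintro t ht hts ⟨j, hj, hr⟩
        refine h3 t ht ((hlu t ht).2 hts) ⟨j, hj, ?_⟩
        refine (relevant_local _ _ _ _ _ fun y hy m hm => ?_).2 hr
        exact hloc y (wball_mono (by omega) hy) m (by omega)
    · intro j hj
      rw [Set.disjoint_union_left]
      exact ⟨huK j, hK l j (hjl j hj).symm⟩
    · ext ω
      simp only [BEv, Blue, RLeEv, Set.mem_setOf_eq, Set.mem_inter_iff, Set.mem_iInter, D]
      constructor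
      · rintro ⟨⟨hu, hex⟩, hl⟩
        have hother : ∀ j ∈ Finset.univ.erase l,
            ¬ RelevantLe (del G u) (labels ω) i (v j) := by
          intro j hj hr
          rw [← relevantLe_del G _ u i hu _ (hadj j).ne'] at hr
          exact hjl j hj (hinj (hex.unique ⟨hadj j, hr⟩ ⟨hadj l, hl⟩))
        refine ⟨⟨?_, ((not_relevantLe_iff _ _ _ _).1 hu).1, ?_⟩, hother⟩
        · rwa [← relevantLe_del G _ u i hu _ (hadj l).ne']
        · rintro t ht hts hr
          refine ((not_relevantLe_iff _ _ _ _).1 hu).2 t ht hts ⟨v l, ⟨hadj l, hr⟩, ?_⟩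
          rintro y ⟨hy, m, hm, hrm⟩
          obtain ⟨j, rfl⟩ := hall y hy
          by_contra hne
          refine hother j (Finset.mem_erase.2 ⟨?_, Finset.mem_univ _⟩) ⟨m, hm.le.trans ht, hrm⟩
          rintro rfl
          exact hne rfl
      · rintro ⟨⟨hl, h0, h3⟩, hother⟩
        have hother' : ∀ y, G.Adj u y → RelevantLe (del G u) (labels ω) i y → y = v l := by
          intro y hy hr
          obtain ⟨j, rfl⟩ := hall y hy
          by_contra hne
          refine hother j (Finset.mem_erase.2 ⟨?_, Finset.mem_univ _⟩) hr
          rintro rfl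
          exact hne rfl
        have hu : ¬ RelevantLe G (labels ω) i u := by
          rw [not_relevantLe_iff]
          refine ⟨h0, fun t ht hts => ?_⟩
          rintro ⟨y, ⟨hy, m, hm, hr⟩, -⟩
          have := hother' y hy ⟨m, hm.le.trans ht, hr⟩
          subst this
          exact h3 t ht hts ⟨m, hm, hr⟩
        have hl' : RelevantLe G (labels ω) i (v l) := by
          rwa [relevantLe_del G _ u i hu _ (hadj l).ne']
        refine ⟨⟨hu, v l, ⟨hadj l, hl'⟩, ?_⟩, hl'⟩
        rintro y ⟨hy, hr⟩
        rw [relevantLe_del G _ u i hu _ hy.ne'] at hr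
        exact hother' y hy hr
    · refine pos_of_pattern hμ hp₀ hp i (fun x t => decide (x = v l ∧ t = 0)) _ fun ω hω => ?_
      have hne : ∀ y, y ≠ v l → ¬ RelevantLe G (labels ω) i y := fun y hy =>
        not_relevantLe_of_empty _ _ _ _ fun t ht => by simp [labels, hω y t ht, hy]
      have hl : RelevantLe G (labels ω) i (v l) := by
        refine ⟨0, Nat.zero_le _, (relevant_iff _ _ _ _).2 (Or.inl ⟨rfl, ?_⟩)⟩
        simp [labels, hω (v l) 0 (Nat.zero_le _)]
      refine ⟨⟨hne u (hadj l).ne, v l, ⟨hadj l, hl⟩, ?_⟩, hl⟩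
      rintro y ⟨_, hr⟩
      by_contra hyl
      exact hne y hyl hr

end InducedForest
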